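/- Let n be a square-free positive integer. Under the action of the Hecke group H(λ₄) on Q*(√-n), every orbit contains a totally positive element: for every α ∈ Q*(√-n) there exists β ∈ Q*(√-n) with Re(β) > 0 lying in the same orbit as α. -/

import Mathlib

open Complex

/-- The set `Q*(√-n)` of complex numbers `(a + √n·i)/c` with `a, c ∈ ℤ`,
`c` even and nonzero, and `c ∣ a² + n`. -/
def Qstar (n : ℕ) : Set ℂ :=
  {z | ∃ a c : ℤ, c ≠ 0 ∧ 2 ∣ c ∧ c ∣ (a ^ 2 + (n : ℤ)) ∧
    z = ((a : ℂ) + Real.sqrt n * Complex.I) / (c : ℂ)}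

/-- The Hecke transformation `x(z) = -1/(2z)`. -/
noncomputable def heckeX (z : ℂ) : ℂ := -1 / (2 * z)

/-- The Hecke transformation `y(z) = -1/(2(z+1))`. -/
noncomputable def heckeY (z : ℂ) : ℂ := -1 / (2 * (z + 1))

/-- One step of the Hecke group action. -/
noncomputable def heckeStep (z w : ℂ) : Prop := w = heckeX z ∨ w = heckeY z

/-- Two elements lie in the same orbit if they are related by the equivalence
relation on `Q*(√-n)` generated by `z ~ x(z)` and `z ~ y(z)`. -/
def sameOrbit (n : ℕ) (z w : ℂ) : Prop :=
  Relation.EqvGen (fun u v => u ∈ Qstar n ∧ v ∈ Qstar n ∧ heckeStep u v) z w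

/-- The quadruplet `Q_α = {α, y(α), y²(α), y³(α)}`. -/
noncomputable def quad (α : ℂ) : Set ℂ :=
  {α, heckeY α, heckeY (heckeY α), heckeY (heckeY (heckeY α))}

/-- The orbit relation on the subtype `Q*(√-n)`. -/
def orbitRel (n : ℕ) (u v : {z : ℂ // z ∈ Qstar n}) : Prop :=
  sameOrbit n u.1 v.1

/-- `E_i(n)`: the number of positive even integers `C` dividing `i² + n`
with `2(i²+n)/C + C ≤ 3i`. -/
def Efun (i n : ℕ) : ℕ :=
  ((i ^ 2 + n).divisors.filter (fun C => 2 ∣ C ∧ 2 * (i ^ 2 + n) / C + C ≤ 3 * i)).card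

/-!
Since `y(z) = x(z + 1)`, the element `x⁻¹y` of the Hecke group is the translation `z ↦ z + 1`.
Both `x` and the integer translations preserve `Q*(√-n)`, so the orbit of `α` contains every
translate `α + k`, and the real parts of these are unbounded.
-/

theorem heckeX_add_mul_I_div {a b c s : ℂ} (hb : b ≠ 0) (hc : c ≠ 0)
    (h : a ^ 2 + s ^ 2 = c * b) :
    heckeX ((a + s * I) / c) = (-a + s * I) / (2 * b) := by
  have mul_eq : (a + s * I) * (-a + s * I) = -(c * b) := by
    linear_combination s ^ 2 * I_sq - h
  have num_ne_zero : a + s * I ≠ 0 :=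
    left_ne_zero_of_mul (mul_eq ▸ neg_ne_zero.mpr (mul_ne_zero hc hb))
  rw [heckeX]
  field_simp
  linear_combination -mul_eq

section Orbits

variable {n : ℕ} {z : ℂ}

theorem add_intCast_mem_Qstar (hz : z ∈ Qstar n) (k : ℤ) : z + k ∈ Qstar n := by
  obtain ⟨a, c, hc, h2, hd, rfl⟩ := hz
  refine ⟨a + k * c, c, hc, h2, ?_, ?_⟩
  · have expand : (a + k * c) ^ 2 + (n : ℤ) = (a ^ 2 + n) + c * (2 * a * k + k ^ 2 * c) := by
      ring
    rw [expand]
    exact dvd_add hd (dvd_mul_right _ _)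
  · have hc' : (c : ℂ) ≠ 0 := Int.cast_ne_zero.mpr hc
    push_cast
    field_simp
    ring

theorem add_one_mem_Qstar (hz : z ∈ Qstar n) : z + 1 ∈ Qstar n := by
  exact_mod_cast add_intCast_mem_Qstar hz 1

theorem heckeX_mem_Qstar (hn : 0 < n) (hz : z ∈ Qstar n) : heckeX z ∈ Qstar n := by
  obtain ⟨a, c, hc, ⟨d, rfl⟩, ⟨b, hb⟩, rfl⟩ := hz
  have norm_pos : 0 < a ^ 2 + (n : ℤ) := by positivity
  have hb0 : b ≠ 0 := right_ne_zero_of_mul (hb ▸ norm_pos.ne')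
  refine ⟨-a, 2 * b, mul_ne_zero two_ne_zero hb0, dvd_mul_right _ _, ⟨d, ?_⟩, ?_⟩
  · linear_combination hb
  · have sqrt_sq : ((√n : ℝ) : ℂ) ^ 2 = n := by
      exact_mod_cast Real.sq_sqrt n.cast_nonneg
    have norm_eq : (a : ℂ) ^ 2 + ((√n : ℝ) : ℂ) ^ 2 = (2 * d : ℤ) * b := by
      rw [sqrt_sq]
      exact_mod_cast hb
    rw [heckeX_add_mul_I_div (Int.cast_ne_zero.mpr hb0) (Int.cast_ne_zero.mpr hc) norm_eq]
    push_cast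
    rfl

theorem heckeY_eq_heckeX_add_one (z : ℂ) : heckeY z = heckeX (z + 1) := rfl

theorem heckeY_mem_Qstar (hn : 0 < n) (hz : z ∈ Qstar n) : heckeY z ∈ Qstar n :=
  heckeY_eq_heckeX_add_one z ▸ heckeX_mem_Qstar hn (add_one_mem_Qstar hz)

theorem sameOrbit_equivalence (n : ℕ) : Equivalence (sameOrbit n) :=
  Relation.EqvGen.is_equivalence _

theorem sameOrbit_heckeX (hn : 0 < n) (hz : z ∈ Qstar n) : sameOrbit n z (heckeX z) :=
  .rel _ _ ⟨hz, heckeX_mem_Qstar hn hz, .inl rfl⟩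

theorem sameOrbit_heckeY (hn : 0 < n) (hz : z ∈ Qstar n) : sameOrbit n z (heckeY z) :=
  .rel _ _ ⟨hz, heckeY_mem_Qstar hn hz, .inr rfl⟩

theorem sameOrbit_add_one (hn : 0 < n) (hz : z ∈ Qstar n) : sameOrbit n z (z + 1) := by
  have orbit_y : sameOrbit n z (heckeX (z + 1)) :=
    heckeY_eq_heckeX_add_one z ▸ sameOrbit_heckeY hn hz
  exact (sameOrbit_equivalence n).trans orbit_y
    ((sameOrbit_equivalence n).symm (sameOrbit_heckeX hn (add_one_mem_Qstar hz)))

theorem sameOrbit_add_intCast (hn : 0 < n) (hz : z ∈ Qstar n) (k : ℤ) :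
    sameOrbit n z (z + k) := by
  have step (j : ℤ) : sameOrbit n (z + j) (z + (j + 1 : ℤ)) := by
    rw [Int.cast_add, Int.cast_one, ← add_assoc]
    exact sameOrbit_add_one hn (add_intCast_mem_Qstar hz j)
  induction k with
  | zero =>
    rw [Int.cast_zero, add_zero]
    exact (sameOrbit_equivalence n).refl z
  | succ k ih => exact (sameOrbit_equivalence n).trans ih (step k)
  | pred k ih =>
    have back := step (-k - 1)
    rw [sub_add_cancel] at back
    exact (sameOrbit_equivalence n).trans ih ((sameOrbit_equivalence n).symm back)

end Orbits

theorem stmt8_general (n : ℕ) (hn : 0 < n) (α : ℂ) (hα : α ∈ Qstar n) (B : ℝ) :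
    ∃ β ∈ Qstar n, B < β.re ∧ sameOrbit n α β := by
  obtain ⟨k, hk⟩ := exists_int_gt (B - α.re)
  refine ⟨α + k, add_intCast_mem_Qstar hα k, ?_, sameOrbit_add_intCast hn hα k⟩
  rw [add_re, intCast_re]
  linarith

theorem stmt8 (n : ℕ) (hn : 0 < n) (hsf : Squarefree n)
    (α : ℂ) (hα : α ∈ Qstar n) :
    ∃ β ∈ Qstar n, 0 < β.re ∧ sameOrbit n α β :=
  stmt8_general n hn α hα 0
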